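/- For every simple graph G on n vertices that is not complete, the toughness satisfies t(G) ≥ μ_n μ_2 / (n(μ_n − δ)), where μ_2 and μ_n are the second smallest and largest Laplacian eigenvalues and δ is the minimum degree. -/

import Mathlib

open SimpleGraph Matrix

/-- The (unordered) eigenvalues of the Laplacian matrix `L = D - A` of `G`. -/
noncomputable def lapEigs {V : Type*} [Fintype V] [DecidableEq V]
    (G : SimpleGraph V) [DecidableRel G.Adj] : V → ℝ :=
  (SimpleGraph.posSemidef_lapMatrix ℝ G).1.eigenvalues

/-- `μ : Fin n → ℝ` is the nondecreasing list of the Laplacian eigenvalues of `G`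
(so `μ 0 = μ_1 ≤ μ 1 = μ_2 ≤ … ≤ μ (n-1) = μ_n`). -/
def IsLapSpectrum {V : Type*} [Fintype V] [DecidableEq V]
    (G : SimpleGraph V) [DecidableRel G.Adj] {n : ℕ} (μ : Fin n → ℝ) : Prop :=
  Monotone μ ∧ ∃ σ : Fin n ≃ V, ∀ i, μ i = lapEigs G (σ i)

/-- The number of connected components of `G - S`. -/
noncomputable def numComp {V : Type*} (G : SimpleGraph V) (S : Finset V) : ℕ :=
  Nat.card (G.induce ((↑S : Set V)ᶜ)).ConnectedComponent

/-! Deleting `S` leaves `c ≥ 2` components. One vertex from each gives an independent set of size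
`c`, so Hoffman's ratio bound yields `c μ_n ≤ n (μ_n - δ)`. One component against the union of the
others gives two sets without edges between them, so Fiedler's bound yields `μ_2 ≤ |S|`. The theorem
is the product of the two inequalities. Both are Rayleigh quotient estimates: for the indicator of
the independent set, and for a vector constant on each of the two sides of the separation. -/

section RayleighQuotient

open scoped RealInnerProductSpace

variable {ι E : Type*} [Fintype ι] [NormedAddCommGroup E] [InnerProductSpace ℝ E]
  {T : E →ₗ[ℝ] E} {b : OrthonormalBasis ι ℝ E} {ν : ι → ℝ}

lemma inner_eigenbasis_map (hb : ∀ i, T (b i) = ν i • b i) (i : ι) (x : E) :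
    ⟪b i, T x⟫ = ν i * ⟪b i, x⟫ := by
  classical
  conv_lhs => rw [← b.sum_repr' x]
  simp [hb, inner_sum, real_inner_smul_right, b.inner_eq_ite, mul_comm]

lemma inner_map_self_eq_sum_eigenbasis (hb : ∀ i, T (b i) = ν i • b i) (x : E) :
    ⟪x, T x⟫ = ∑ i, ν i * ⟪b i, x⟫ ^ 2 := by
  rw [← b.sum_inner_mul_inner x (T x)]
  refine Finset.sum_congr rfl fun i _ ↦ ?_
  rw [inner_eigenbasis_map hb, real_inner_comm]
  ring

lemma inner_map_self_le_mul_norm_sq (hb : ∀ i, T (b i) = ν i • b i) {M : ℝ}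
    (hM : ∀ i, ν i ≤ M) (x : E) : ⟪x, T x⟫ ≤ M * ‖x‖ ^ 2 := by
  rw [inner_map_self_eq_sum_eigenbasis hb, ← b.sum_sq_inner_right, Finset.mul_sum]
  gcongr with i
  exact hM i

lemma inner_eigenbasis_eq_zero_of_inner_eigenvector_eq_zero (hb : ∀ i, T (b i) = ν i • b i)
    {e x : E} {c : ℝ} (he : T e = c • e) (he₀ : e ≠ 0) {i₀ : ι} (hc : ∀ i ≠ i₀, ν i ≠ c)
    (hx : ⟪e, x⟫ = 0) : ⟪b i₀, x⟫ = 0 := by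
  have h_orth : ∀ i ≠ i₀, ⟪b i, e⟫ = 0 := by
    intro i hi
    have h_eq : ν i * ⟪b i, e⟫ = c * ⟪b i, e⟫ := by
      rw [← inner_eigenbasis_map hb, he, real_inner_smul_right]
    exact (mul_eq_mul_right_iff.mp h_eq).resolve_left (hc i hi)
  have h_single : e = ⟪b i₀, e⟫ • b i₀ := by
    conv_lhs => rw [← b.sum_repr' e]
    exact Fintype.sum_eq_single i₀ fun i hi ↦ by rw [h_orth i hi, zero_smul]
  have h_coeff : ⟪b i₀, e⟫ ≠ 0 := fun h ↦ he₀ (by rw [h_single, h, zero_smul])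
  rw [h_single, real_inner_smul_left] at hx
  exact (mul_eq_zero.mp hx).resolve_left h_coeff

lemma mul_norm_sq_le_inner_map_self (hb : ∀ i, T (b i) = ν i • b i) {e x : E} {c : ℝ}
    (he : T e = c • e) (he₀ : e ≠ 0) (hc : ∀ i, c ≤ ν i) {m : ℝ} {i₀ : ι}
    (hm : ∀ i ≠ i₀, m ≤ ν i) (hx : ⟪e, x⟫ = 0) : m * ‖x‖ ^ 2 ≤ ⟪x, T x⟫ := by
  rw [inner_map_self_eq_sum_eigenbasis hb, ← b.sum_sq_inner_right, Finset.mul_sum]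
  refine Finset.sum_le_sum fun i _ ↦ ?_
  rcases le_or_gt m c with hmc | hcm
  · exact mul_le_mul_of_nonneg_right (hmc.trans (hc i)) (sq_nonneg _)
  rcases eq_or_ne i i₀ with rfl | hi
  · have h_ne : ∀ j ≠ i, ν j ≠ c := fun j hj ↦ (hcm.trans_le (hm j hj)).ne'
    simp [inner_eigenbasis_eq_zero_of_inner_eigenvector_eq_zero hb he he₀ h_ne hx]
  · exact mul_le_mul_of_nonneg_right (hm i hi) (sq_nonneg _)

lemma inner_toEuclideanLin_self {n : Type*} [Fintype n] [DecidableEq n] (A : Matrix n n ℝ)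
    (x : n → ℝ) : ⟪WithLp.toLp 2 x, toEuclideanLin A (WithLp.toLp 2 x)⟫ = x ⬝ᵥ A *ᵥ x := by
  rw [toLpLin_toLp, EuclideanSpace.inner_toLp_toLp, star_trivial, dotProduct_comm, toLin'_apply]

lemma norm_sq_toLp {n : Type*} [Fintype n] (x : n → ℝ) : ‖WithLp.toLp 2 x‖ ^ 2 = x ⬝ᵥ x := by
  rw [← real_inner_self_eq_norm_sq, EuclideanSpace.inner_toLp_toLp, star_trivial]

end RayleighQuotient

section Laplacian

variable {V : Type*} [Fintype V] [DecidableEq V] (G : SimpleGraph V) [DecidableRel G.Adj]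

lemma lapEigs_nonneg (v : V) : 0 ≤ lapEigs G v :=
  (posSemidef_lapMatrix ℝ G).eigenvalues_nonneg v

lemma toEuclideanLin_lapMatrix_eigenvectorBasis (v : V) :
    toEuclideanLin (G.lapMatrix ℝ) ((posSemidef_lapMatrix ℝ G).1.eigenvectorBasis v) =
      lapEigs G v • (posSemidef_lapMatrix ℝ G).1.eigenvectorBasis v := by
  rw [toLpLin_apply, IsHermitian.mulVec_eigenvectorBasis]
  rfl

variable {G}

lemma dotProduct_lapMatrix_mulVec_le {M : ℝ} (hM : ∀ v, lapEigs G v ≤ M) (x : V → ℝ) :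
    x ⬝ᵥ G.lapMatrix ℝ *ᵥ x ≤ M * (x ⬝ᵥ x) := by
  rw [← inner_toEuclideanLin_self, ← norm_sq_toLp]
  exact inner_map_self_le_mul_norm_sq (toEuclideanLin_lapMatrix_eigenvectorBasis G) hM _

lemma mul_dotProduct_self_le_dotProduct_lapMatrix_mulVec {m : ℝ} {v₀ : V}
    (hm : ∀ v ≠ v₀, m ≤ lapEigs G v) {x : V → ℝ} (hx : ∑ v, x v = 0) :
    m * (x ⬝ᵥ x) ≤ x ⬝ᵥ G.lapMatrix ℝ *ᵥ x := by
  have : Nonempty V := ⟨v₀⟩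
  rw [← inner_toEuclideanLin_self, ← norm_sq_toLp]
  refine mul_norm_sq_le_inner_map_self (toEuclideanLin_lapMatrix_eigenvectorBasis G)
    (e := WithLp.toLp 2 fun _ ↦ 1) (c := 0) ?_ ?_ (lapEigs_nonneg G) hm ?_
  · rw [toLpLin_toLp, toLin'_apply, lapMatrix_mulVec_const_eq_zero, zero_smul, WithLp.toLp_zero]
  · simp [WithLp.toLp_eq_zero, funext_iff]
  · simpa [EuclideanSpace.inner_toLp_toLp, dotProduct] using hx

lemma card_mul_dotProduct_lapMatrix_mulVec_le {M : ℝ} (hM : ∀ v, lapEigs G v ≤ M)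
    (x : V → ℝ) : Fintype.card V * (x ⬝ᵥ G.lapMatrix ℝ *ᵥ x) ≤
      M * (Fintype.card V * (x ⬝ᵥ x) - (∑ v, x v) ^ 2) := by
  rcases isEmpty_or_nonempty V with _ | _
  · simp
  set N : ℝ := (Fintype.card V : ℝ)
  set s : ℝ := ∑ v, x v
  set one : V → ℝ := fun _ ↦ 1
  have hN : 0 < N := Nat.cast_pos.mpr Fintype.card_pos
  have h_one_one : one ⬝ᵥ one = N := by simp [one, N, dotProduct]
  have h_one_x : one ⬝ᵥ x = s := by simp [one, s, dotProduct]
  have h_map_one : G.lapMatrix ℝ *ᵥ one = 0 := G.lapMatrix_mulVec_const_eq_zero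
  have h_one_map : one ⬝ᵥ G.lapMatrix ℝ *ᵥ x = 0 := by
    rw [dotProduct_mulVec, ← mulVec_transpose, (G.isSymm_lapMatrix ℝ).eq, h_map_one,
      zero_dotProduct]
  -- `N • x - s • one` is `N` times the projection of `x` orthogonal to `one`.
  have h_form : (N • x - s • one) ⬝ᵥ G.lapMatrix ℝ *ᵥ (N • x - s • one) =
      N * (N * (x ⬝ᵥ G.lapMatrix ℝ *ᵥ x)) := by
    simp [mulVec_sub, mulVec_smul, h_map_one, sub_dotProduct, h_one_map]
  have h_self : (N • x - s • one) ⬝ᵥ (N • x - s • one) = N * (N * (x ⬝ᵥ x) - s ^ 2) := by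
    simp only [sub_dotProduct, dotProduct_sub, smul_dotProduct, dotProduct_smul, smul_eq_mul,
      dotProduct_comm x one, h_one_one, h_one_x]
    ring
  have h_rayleigh := dotProduct_lapMatrix_mulVec_le hM (N • x - s • one)
  rw [h_form, h_self, mul_left_comm M] at h_rayleigh
  exact le_of_mul_le_mul_left h_rayleigh hN

lemma lapMatrix_mulVec_apply_eq_sum_sub {R : Type*} [NonAssocRing R] (x : V → R) (v : V) :
    (G.lapMatrix R *ᵥ x) v = ∑ u ∈ G.neighborFinset v, (x v - x u) := by
  simp [lapMatrix_mulVec_apply]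

lemma dotProduct_lapMatrix_mulVec_indicator_eq_sum_degree {R : Type*} [NonAssocRing R]
    {I : Finset V} (hI : G.IsIndepSet I) :
    (I : Set V).indicator 1 ⬝ᵥ G.lapMatrix R *ᵥ (I : Set V).indicator 1 =
      ∑ v ∈ I, (G.degree v : R) := by
  have h_apply : ∀ v ∈ I, (G.lapMatrix R *ᵥ (I : Set V).indicator 1) v = G.degree v := by
    intro v hv
    have h_notMem : ∀ u ∈ G.neighborFinset v, u ∉ I := fun u hu hu' ↦
      have h_adj : G.Adj v u := (G.mem_neighborFinset v u).mp hu
      hI hv hu' h_adj.ne h_adj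
    rw [lapMatrix_mulVec_apply, Finset.sum_eq_zero fun u hu ↦ by simp [h_notMem u hu]]
    simp [hv]
  simp [dotProduct, Set.indicator_apply, Finset.sum_congr rfl h_apply]

lemma card_mul_le_of_isIndepSet {M : ℝ} (hM : ∀ v, lapEigs G v ≤ M) {I : Finset V}
    (hI : G.IsIndepSet I) (hI₀ : I.Nonempty) :
    I.card * M ≤ Fintype.card V * (M - G.minDegree) := by
  have h_card : (0 : ℝ) < I.card := mod_cast hI₀.card_pos
  have h_deg : (I.card : ℝ) * G.minDegree ≤ ∑ v ∈ I, (G.degree v : ℝ) := by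
    rw [← nsmul_eq_mul]
    exact Finset.card_nsmul_le_sum I _ _ fun v _ ↦ mod_cast G.minDegree_le_degree v
  have h_rayleigh := card_mul_dotProduct_lapMatrix_mulVec_le hM ((I : Set V).indicator 1)
  have h_self : (I : Set V).indicator (1 : V → ℝ) ⬝ᵥ (I : Set V).indicator 1 = I.card := by
    simp [dotProduct, Set.indicator_apply]
  have h_sum : ∑ v, (I : Set V).indicator (1 : V → ℝ) v = I.card := by
    simp [Set.indicator_apply]
  rw [dotProduct_lapMatrix_mulVec_indicator_eq_sum_degree hI, h_self, h_sum] at h_rayleigh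
  refine le_of_mul_le_mul_left ?_ h_card
  have h_scaled := mul_le_mul_of_nonneg_left h_deg (Nat.cast_nonneg (α := ℝ) (Fintype.card V))
  linarith

lemma dotProduct_lapMatrix_mulVec_le_card_mul {S : Finset V} {x : V → ℝ}
    (hxS : ∀ v ∈ S, x v = 0) (hx : ∀ u ∉ S, ∀ v ∉ S, G.Adj u v → x u = x v) :
    x ⬝ᵥ G.lapMatrix ℝ *ᵥ x ≤ S.card * (x ⬝ᵥ x) := by
  rw [dotProduct, dotProduct, Finset.mul_sum]
  refine Finset.sum_le_sum fun v _ ↦ ?_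
  by_cases hv : v ∈ S
  · simp [hxS v hv]
  have h_apply : (G.lapMatrix ℝ *ᵥ x) v = (G.neighborFinset v ∩ S).card * x v := by
    have h_term : ∀ u ∈ G.neighborFinset v, x v - x u = if u ∈ S then x v else 0 := by
      intro u hu
      split_ifs with huS
      · rw [hxS u huS, sub_zero]
      · rw [hx v hv u huS ((G.mem_neighborFinset v u).mp hu), sub_self]
    rw [lapMatrix_mulVec_apply_eq_sum_sub, Finset.sum_congr rfl h_term, Finset.sum_ite_mem,
      Finset.sum_const, nsmul_eq_mul]
  calc x v * (G.lapMatrix ℝ *ᵥ x) v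
      = (G.neighborFinset v ∩ S).card * (x v * x v) := by rw [h_apply]; ring
    _ ≤ S.card * (x v * x v) := by
        gcongr
        exacts [mul_self_nonneg _, Finset.inter_subset_right]

lemma le_card_compl_union_of_not_adj {m : ℝ} {v₀ : V} (hm : ∀ v ≠ v₀, m ≤ lapEigs G v)
    {A B : Finset V} (hA : A.Nonempty) (hB : B.Nonempty) (hAB : Disjoint A B)
    (h_adj : ∀ a ∈ A, ∀ b ∈ B, ¬ G.Adj a b) : m ≤ (A ∪ B)ᶜ.card := by
  let x : V → ℝ := fun v ↦ (if v ∈ A then (B.card : ℝ) else 0) - if v ∈ B then (A.card : ℝ) else 0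
  have hxA : ∀ v ∈ A, x v = B.card := fun v hv ↦ by
    simp [x, hv, Finset.disjoint_left.mp hAB hv]
  have hxB : ∀ v ∈ B, x v = -A.card := fun v hv ↦ by
    simp [x, hv, Finset.disjoint_right.mp hAB hv]
  have hx_sum : ∑ v, x v = 0 := by simp [x, mul_comm]
  have hx_compl : ∀ v ∈ (A ∪ B)ᶜ, x v = 0 := fun v hv ↦ by
    simp only [Finset.mem_compl, Finset.mem_union, not_or] at hv
    simp [x, hv]
  have hx_adj : ∀ u ∉ (A ∪ B)ᶜ, ∀ v ∉ (A ∪ B)ᶜ, G.Adj u v → x u = x v := by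
    intro u hu v hv huv
    simp only [Finset.mem_compl, Finset.mem_union, not_not] at hu hv
    rcases hu with hu | hu <;> rcases hv with hv | hv
    · rw [hxA u hu, hxA v hv]
    · exact absurd huv (h_adj u hu v hv)
    · exact absurd huv.symm (h_adj v hv u hu)
    · rw [hxB u hu, hxB v hv]
  have hx_pos : 0 < x ⬝ᵥ x := by
    obtain ⟨a, ha⟩ := hA
    have hxa : x a ≠ 0 := by
      rw [hxA a ha]
      exact_mod_cast hB.card_ne_zero
    exact Finset.sum_pos' (fun v _ ↦ mul_self_nonneg _) ⟨a, Finset.mem_univ a, mul_self_pos.mpr hxa⟩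
  exact le_of_mul_le_mul_right ((mul_dotProduct_self_le_dotProduct_lapMatrix_mulVec hm hx_sum).trans
    (dotProduct_lapMatrix_mulVec_le_card_mul hx_compl hx_adj)) hx_pos

end Laplacian

lemma exists_isIndepSet_card_eq_numComp {V : Type*} [Finite V] (G : SimpleGraph V) (S : Finset V) :
    ∃ I : Finset V, G.IsIndepSet I ∧ I.card = numComp G S := by
  classical
  let H := G.induce (S : Set V)ᶜ
  have := Fintype.ofFinite H.ConnectedComponent
  let rep : H.ConnectedComponent → V := fun C ↦ C.out
  have h_inj : Function.Injective rep :=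
    Subtype.val_injective.comp (Function.RightInverse.injective Quot.out_eq)
  refine ⟨Finset.univ.image rep, ?_, ?_⟩
  · rw [Finset.coe_image, Finset.coe_univ, Set.image_univ]
    rintro _ ⟨C, rfl⟩ _ ⟨D, rfl⟩ h_ne h_adj
    have h_eq : H.connectedComponentMk C.out = H.connectedComponentMk D.out :=
      ConnectedComponent.connectedComponentMk_eq_of_adj h_adj
    have hCD : C = D := (Quot.out_eq C).symm.trans (h_eq.trans (Quot.out_eq D))
    exact h_ne (congrArg rep hCD)
  · rw [Finset.card_image_of_injective _ h_inj, Finset.card_univ, numComp,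
      Nat.card_eq_fintype_card]

lemma exists_separation_of_two_le_numComp {V : Type*} [Fintype V] [DecidableEq V]
    {G : SimpleGraph V} {S : Finset V} (hS : 2 ≤ numComp G S) :
    ∃ A B : Finset V, A.Nonempty ∧ B.Nonempty ∧ Disjoint A B ∧ (A ∪ B)ᶜ = S ∧
      ∀ a ∈ A, ∀ b ∈ B, ¬ G.Adj a b := by
  classical
  let H := G.induce (S : Set V)ᶜ
  have : Nontrivial H.ConnectedComponent := Finite.one_lt_card_iff_nontrivial.mp hS
  obtain ⟨C, D, hCD⟩ := exists_pair_ne H.ConnectedComponent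
  let A : Finset V := {v | v ∈ Subtype.val '' C.supp}
  have hA : ∀ v (hv : v ∉ S), v ∈ A ↔ H.connectedComponentMk ⟨v, hv⟩ = C := by
    simp +contextual [A]
  have hAS : A ⊆ Sᶜ := by
    intro v hv
    obtain ⟨w, -, rfl⟩ := (Finset.mem_filter.mp hv).2
    exact Finset.mem_compl.mpr w.2
  refine ⟨A, Sᶜ \ A, ?_, ?_, Finset.disjoint_sdiff, ?_, ?_⟩
  · obtain ⟨⟨v, hv⟩, rfl⟩ := C.exists_rep
    exact ⟨v, (hA v hv).mpr rfl⟩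
  · obtain ⟨⟨v, hv⟩, rfl⟩ := D.exists_rep
    exact ⟨v, Finset.mem_sdiff.mpr ⟨Finset.mem_compl.mpr hv, fun h ↦ hCD ((hA v hv).mp h).symm⟩⟩
  · rw [Finset.union_sdiff_of_subset hAS, compl_compl]
  · intro a ha b hb h_adj
    obtain ⟨hbS, hbA⟩ := Finset.mem_sdiff.mp hb
    have haS := Finset.mem_compl.mp (hAS ha)
    rw [Finset.mem_compl] at hbS
    have h_comp : H.connectedComponentMk ⟨a, haS⟩ = H.connectedComponentMk ⟨b, hbS⟩ :=
      ConnectedComponent.connectedComponentMk_eq_of_adj h_adj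
    exact hbA ((hA b hbS).mpr (h_comp.symm.trans ((hA a haS).mp ha)))

namespace IsLapSpectrum

variable {V : Type*} [Fintype V] [DecidableEq V] {G : SimpleGraph V} [DecidableRel G.Adj]
  {n : ℕ} {μ : Fin n → ℝ}

lemma card_eq (hμ : IsLapSpectrum G μ) : Fintype.card V = n := by
  obtain ⟨-, σ, -⟩ := hμ
  simpa using (Fintype.card_congr σ).symm

lemma nonneg (hμ : IsLapSpectrum G μ) (i : Fin n) : 0 ≤ μ i := by
  obtain ⟨-, σ, hσ⟩ := hμ
  rw [hσ]
  exact lapEigs_nonneg G _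

lemma lapEigs_le_last (hμ : IsLapSpectrum G μ) (hn : n - 1 < n) (v : V) :
    lapEigs G v ≤ μ ⟨n - 1, hn⟩ := by
  obtain ⟨h_mono, σ, hσ⟩ := hμ
  rw [← σ.apply_symm_apply v, ← hσ]
  exact h_mono (Fin.le_def.mpr (Nat.le_sub_one_of_lt (σ.symm v).isLt))

lemma exists_second_le_lapEigs (hμ : IsLapSpectrum G μ) (hn : 1 < n) :
    ∃ v₀, ∀ v ≠ v₀, μ ⟨1, hn⟩ ≤ lapEigs G v := by
  obtain ⟨h_mono, σ, hσ⟩ := hμ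
  refine ⟨σ ⟨0, by omega⟩, fun v hv ↦ ?_⟩
  rw [← σ.apply_symm_apply v, ← hσ]
  refine h_mono (Fin.le_def.mpr (Nat.one_le_iff_ne_zero.mpr fun h ↦ hv ?_))
  exact σ.symm_apply_eq.mp (Fin.ext h)

end IsLapSpectrum

theorem stmt4_general {V : Type*} [Fintype V] [DecidableEq V] {n : ℕ} (hn : 2 ≤ n)
    (G : SimpleGraph V) [DecidableRel G.Adj] (μ : Fin n → ℝ) (hμ : IsLapSpectrum G μ)
    (S : Finset V) (hdis : 2 ≤ numComp G S) :
    μ ⟨n - 1, by omega⟩ * μ ⟨1, by omega⟩ / ((n : ℝ) * (μ ⟨n - 1, by omega⟩ - G.minDegree)) *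
      numComp G S ≤ (S.card : ℝ) := by
  set M := μ ⟨n - 1, by omega⟩
  set m := μ ⟨1, by omega⟩
  obtain ⟨I, hI, hI_card⟩ := exists_isIndepSet_card_eq_numComp G S
  obtain ⟨A, B, hA, hB, hAB, rfl, h_adj⟩ := exists_separation_of_two_le_numComp hdis
  obtain ⟨v₀, hm⟩ := hμ.exists_second_le_lapEigs hn
  have h_fiedler : m ≤ (A ∪ B)ᶜ.card := le_card_compl_union_of_not_adj hm hA hB hAB h_adj
  have h_hoffman : numComp G (A ∪ B)ᶜ * M ≤ n * (M - G.minDegree) := by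
    rw [← hI_card, ← hμ.card_eq]
    exact card_mul_le_of_isIndepSet (hμ.lapEigs_le_last _) hI (Finset.card_pos.mp (by omega))
  -- The denominator is `0` if `G` has no edges, hence `div_le_one_of_le₀` for the junk value.
  have h_ratio : numComp G (A ∪ B)ᶜ * M / (n * (M - G.minDegree)) ≤ 1 :=
    div_le_one_of_le₀ h_hoffman ((mul_nonneg (Nat.cast_nonneg _) (hμ.nonneg _)).trans h_hoffman)
  calc M * m / (n * (M - G.minDegree)) * numComp G (A ∪ B)ᶜ
      = m * (numComp G (A ∪ B)ᶜ * M / (n * (M - G.minDegree))) := by ring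
    _ ≤ m := mul_le_of_le_one_right (hμ.nonneg _) h_ratio
    _ ≤ (A ∪ B)ᶜ.card := h_fiedler

theorem stmt4 {n : ℕ} [NeZero n] (hn : 2 ≤ n) (G : SimpleGraph (Fin n)) [DecidableRel G.Adj]
    (hnc : G ≠ ⊤) (μ : Fin n → ℝ) (hμ : IsLapSpectrum G μ)
    (S : Finset (Fin n)) (hdis : 2 ≤ numComp G S) :
    μ ⟨n - 1, by omega⟩ * μ ⟨1, by omega⟩ / ((n : ℝ) * (μ ⟨n - 1, by omega⟩ - G.minDegree)) *
      numComp G S ≤ (S.card : ℝ) := by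
  exact stmt4_general hn G μ hμ S hdis
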